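/- arXiv:2404.04119 — 3 statements merged into one kernel-verified Lean document; each statement's English description precedes it below -/
import Mathlib

section
/- Let X be a real Banach space, λ₀ ∈ ℝ, u₀ ∈ X, and let G : ℝ × X → X be a compact continuous map, i.e. G is continuous and maps bounded subsets of ℝ × X to relatively compact subsets of X. Set F(λ,u) := u − G(λ,u). If G(λ₀,u) ≡ u₀ for all u ∈ X, then the set S contains a pair of unbounded connected components C⁺ and C⁻, contained in [λ₀,∞) × X and (−∞,λ₀] × X respectively, such that C⁺ ∩ C⁻ = {(λ₀,u₀)}. -/
open Set Bornology

/-!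
Suppose that the component of `(l₀, u₀)` in the set of solutions over a half-line is bounded. On
compact sets components are intersections of clopen sets, so Urysohn's lemma gives a continuous
`φ : ℝ × X → [0, 1]` with bounded support which is `1` at `(l₀, u₀)` and takes only the values
`0` and `1` on solutions. For large `M`, Schauder's theorem yields a fixed point of
`(l, u) ↦ (l', G (l', u))` with `l' = l₀ ± M * φ (l, u)`. It is a solution, so `φ` is `0` or `1`
there. If `0`, it is `(l₀, u₀)`, where `φ = 1`; if `1`, it lies over `l₀ ± M`, outside the support
of `φ`.

Schauder's theorem is reduced to Brouwer's by projecting a compact set onto the convex hull of a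
finite net, and Brouwer's theorem on a simplex follows from Scarf's combinatorial lemma, applied to
lattice points coloured by a coordinate which the map does not decrease.
-/

section Scarf

open scoped Finset

theorem card_filter_image_erase_eq_two {α β : Type*} [DecidableEq α] [DecidableEq β]
    (f : α → β) (s : Finset α) (h : #(s.image f) + 1 = #s) :
    #{k ∈ s | (s.erase k).image f = s.image f} = 2 := by
  obtain ⟨a, ha, b, hb, hab, hfab⟩ := Finset.exists_ne_map_eq_of_card_lt_of_maps_to
    (show #(s.image f) < #s by omega) fun x hx ↦ Finset.mem_image_of_mem f hx
  have image_erase : ∀ {c d}, d ∈ s → c ≠ d → f c = f d →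
      (s.erase c).image f = s.image f := by
    intro c d hd hcd hfcd
    refine (Finset.image_subset_image (Finset.erase_subset _ _)).antisymm fun y hy ↦ ?_
    obtain ⟨x, hx, rfl⟩ := Finset.mem_image.mp hy
    obtain rfl | hxc := eq_or_ne x c
    · exact hfcd ▸ Finset.mem_image_of_mem f (Finset.mem_erase.mpr ⟨hcd.symm, hd⟩)
    · exact Finset.mem_image_of_mem f (Finset.mem_erase.mpr ⟨hxc, hx⟩)
  refine Finset.card_eq_two.mpr ⟨a, b, hab, Finset.ext fun k ↦ ?_⟩
  simp only [Finset.mem_filter, Finset.mem_insert, Finset.mem_singleton]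
  constructor
  · rintro ⟨hk, himage⟩
    have hinj : Set.InjOn f (s.erase k) := Finset.card_image_iff.mp <| by
      rw [himage, Finset.card_erase_of_mem hk]; omega
    by_contra! hne
    exact hab (hinj (by simp [ha, hne.1.symm]) (by simp [hb, hne.2.symm]) hfab)
  · rintro (rfl | rfl)
    · exact ⟨ha, image_erase hb hab hfab⟩
    · exact ⟨hb, image_erase ha hab.symm hfab.symm⟩

/-- Scarf's dominance with respect to a family of linear orders, encoded by maps `r i : V → α`:
no point exceeds, in every one of the orders at once, the least element of `σ`. The dominant
sets of cardinality `|I|` play the role of the maximal simplices of a triangulation. -/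
def IsDominant {I V α : Type*} [LinearOrder α] (r : I → V → α) (σ : Finset V) : Prop :=
  ∀ y, ∃ i, ∀ x ∈ σ, r i y ≤ r i x

/-- `m i` is a least element of `σ` for the order `r i`. -/
def IsMinMap {I V α : Type*} [LinearOrder α] (r : I → V → α) (σ : Finset V) (m : I → V) : Prop :=
  ∀ i, m i ∈ σ ∧ ∀ x ∈ σ, r i (m i) ≤ r i x

/-- `x` is `r k`-greatest among the points lying above `m l` for all orders `r l` with `l ≠ k`.
If `m` selects the least elements of `τ`, this is the vertex that completes `τ` when the `k`-th
constraint is released. -/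
def IsCompletion {I V α : Type*} [LinearOrder α] (r : I → V → α) (m : I → V) (k : I) (x : V) :
    Prop :=
  (∀ l ≠ k, r l (m l) < r l x) ∧ ∀ y, (∀ l ≠ k, r l (m l) < r l y) → r k y ≤ r k x

variable {I V α : Type*} [LinearOrder α] {r : I → V → α} {σ τ : Finset V} {m : I → V}

theorem IsDominant.mono (hσ : IsDominant r σ) (h : τ ⊆ σ) : IsDominant r τ :=
  fun y ↦ (hσ y).imp fun _ hi x hx ↦ hi x (h hx)

theorem exists_isMinMap (r : I → V → α) (hσ : σ.Nonempty) : ∃ m, IsMinMap r σ m :=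
  Classical.axiomOfChoice fun i ↦ σ.exists_min_image (r i) hσ

namespace IsMinMap

theorem isDominant_iff (hm : IsMinMap r σ m) :
    IsDominant r σ ↔ ∀ y, ∃ i, r i y ≤ r i (m i) :=
  forall_congr' fun _ ↦ exists_congr fun i ↦
    ⟨fun h ↦ h _ (hm i).1, fun h x hx ↦ h.trans ((hm i).2 x hx)⟩

theorem eq_of_forall_le (hm : IsMinMap r σ m) {i : I} (hr : (r i).Injective) {x : V} (hx : x ∈ σ)
    (hle : ∀ y ∈ σ, r i x ≤ r i y) : m i = x :=
  hr (((hm i).2 x hx).antisymm (hle _ (hm i).1))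

theorem image_eq [Fintype I] [DecidableEq V] (hm : IsMinMap r σ m) (hr : ∀ i, (r i).Injective)
    (hσ : IsDominant r σ) : Finset.univ.image m = σ := by
  refine Finset.Subset.antisymm (Finset.image_subset_iff.mpr fun i _ ↦ (hm i).1) fun x hx ↦ ?_
  obtain ⟨i, hi⟩ := hσ x
  exact Finset.mem_image.mpr ⟨i, Finset.mem_univ i, hm.eq_of_forall_le (hr i) hx hi⟩

end IsMinMap

theorem exists_isCompletion [Finite V] {k : I} (h : ∃ y, ∀ l ≠ k, r l (m l) < r l y) :
    ∃ x, IsCompletion r m k x :=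
  Set.exists_max_image {y | ∀ l ≠ k, r l (m l) < r l y} (r k) (Set.toFinite _) h

namespace IsCompletion

variable {k : I} {x : V}

theorem eq {y : V} (hx : IsCompletion r m k x) (hy : IsCompletion r m k y)
    (hr : (r k).Injective) : x = y :=
  hr ((hy.2 x hx.1).antisymm (hx.2 y hy.1))

theorem eq_index (hx : IsCompletion r m k x) {i : I} (hi : r i x ≤ r i (m i)) : i = k := by
  by_contra hik
  exact (hx.1 i hik).not_ge hi

theorem notMem [Fintype I] [DecidableEq I] [DecidableEq V] (hx : IsCompletion r m k x)
    (hτ : (Finset.univ.erase k).image m = τ) : x ∉ τ := by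
  rintro hxτ
  obtain ⟨l, hl, rfl⟩ := Finset.mem_image.mp (hτ ▸ hxτ)
  exact lt_irrefl _ (hx.1 l (Finset.ne_of_mem_erase hl))

theorem isDominant_insert [DecidableEq V] (hx : IsCompletion r m k x) (hm : IsMinMap r τ m)
    (hτ : IsDominant r τ) : IsDominant r (insert x τ) := by
  intro y
  by_cases hy : ∀ l ≠ k, r l (m l) < r l y
  · obtain ⟨i, hi⟩ := hm.isDominant_iff.mp hτ x
    obtain rfl := hx.eq_index hi
    have hyx := hx.2 y hy
    exact ⟨i, (Finset.forall_mem_insert _ _ _).mpr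
      ⟨hyx, fun z hz ↦ hyx.trans (hi.trans ((hm i).2 z hz))⟩⟩
  · push Not at hy
    obtain ⟨l, hlk, hl⟩ := hy
    exact ⟨l, (Finset.forall_mem_insert _ _ _).mpr
      ⟨hl.trans (hx.1 l hlk).le, fun z hz ↦ hl.trans ((hm l).2 z hz)⟩⟩

end IsCompletion

theorem IsMinMap.exists_isCompletion_of_isDominant_insert [Fintype I] [DecidableEq I]
    [DecidableEq V] {x : V} (hm : IsMinMap r τ m) (hr : ∀ i, (r i).Injective)
    (hcard : #τ + 1 = Fintype.card I) (hx : x ∉ τ) (hdom : IsDominant r (insert x τ)) :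
    ∃ k, (Finset.univ.erase k).image m = τ ∧ IsCompletion r m k x := by
  obtain ⟨m', hm'⟩ := exists_isMinMap r (Finset.insert_nonempty x τ)
  have himage := hm'.image_eq hr hdom
  have hinj : m'.Injective := by
    refine Set.injOn_univ.mp ?_
    rw [← Finset.coe_univ, ← Finset.card_image_iff, himage, Finset.card_insert_of_notMem hx, hcard,
      Finset.card_univ]
  obtain ⟨k, -, hk⟩ := Finset.mem_image.mp (himage.symm ▸ Finset.mem_insert_self x τ)
  have hmem : ∀ l ≠ k, m' l ∈ τ := fun l hl ↦
    Finset.mem_of_mem_insert_of_ne (hm' l).1 fun h ↦ hl (hinj (h.trans hk.symm))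
  have heq : ∀ l ≠ k, m l = m' l := fun l hl ↦ hm.eq_of_forall_le (hr l) (hmem l hl)
    fun y hy ↦ (hm' l).2 y (Finset.mem_insert_of_mem hy)
  refine ⟨k, Finset.Subset.antisymm (Finset.image_subset_iff.mpr fun i _ ↦ (hm i).1) fun z hz ↦ ?_,
    fun l hl ↦ ?_, fun y hy ↦ ?_⟩
  · obtain ⟨l, -, rfl⟩ := Finset.mem_image.mp (himage.symm ▸ Finset.mem_insert_of_mem hz)
    have hl : l ≠ k := by rintro rfl; exact hx (hk ▸ hz)
    exact Finset.mem_image.mpr ⟨l, by simp [hl], heq l hl⟩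
  · rw [heq l hl]
    exact ((hm' l).2 x (Finset.mem_insert_self x τ)).lt_of_ne
      fun h ↦ hx (hr l h ▸ hmem l hl)
  · obtain ⟨i, hi⟩ := hm'.isDominant_iff.mp hdom y
    obtain rfl : i = k := by
      by_contra hik
      exact (hy i hik).not_ge (heq i hik ▸ hi)
    exact hk ▸ hi

theorem card_facets_same_image_eq_two [DecidableEq I] [Fintype V] [DecidableEq V] {c : V → I}
    (h : #(σ.image c) + 1 = #σ) :
    #{τ : Finset V | (#τ + 1 = #σ ∧ τ.image c = σ.image c) ∧ τ ⊆ σ} = 2 := by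
  rw [← card_filter_image_erase_eq_two c σ h]
  symm
  refine Finset.card_bij (fun k _ ↦ σ.erase k) ?_ ?_ ?_
  · intro k hk
    obtain ⟨hkσ, hk⟩ := Finset.mem_filter.mp hk
    exact Finset.mem_filter.mpr ⟨Finset.mem_univ _, ⟨Finset.card_erase_add_one hkσ, hk⟩,
      Finset.erase_subset k σ⟩
  · exact fun k hk l hl ↦ σ.erase_injOn (Finset.mem_filter.mp hk).1 (Finset.mem_filter.mp hl).1
  · intro τ hτ
    obtain ⟨⟨hτcard, hτc⟩, hτσ⟩ := (Finset.mem_filter.mp hτ).2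
    obtain ⟨x, hx, rfl⟩ := Finset.exists_eq_insert_iff.mpr ⟨hτσ, hτcard⟩
    refine ⟨x, ?_, Finset.erase_insert hx⟩
    exact Finset.mem_filter.mpr ⟨Finset.mem_insert_self x τ, by rw [Finset.erase_insert hx, hτc]⟩

section Pivoting

variable [Fintype I] [Fintype V] [DecidableEq V] [DecidablePred (IsDominant r)]

theorem card_dominant_supersets_eq_two (hr : ∀ i, (r i).Injective) (hne : τ.Nonempty)
    (hcard : #τ + 1 = Fintype.card I) (hτ : IsDominant r τ)
    (habove : ∀ k, ∃ y, ∀ l ≠ k, ∃ x ∈ τ, r l x < r l y) :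
    #{σ : Finset V | (#σ = Fintype.card I ∧ IsDominant r σ) ∧ τ ⊆ σ} = 2 := by
  classical
  obtain ⟨m, hm⟩ := exists_isMinMap r hne
  have himage := hm.image_eq hr hτ
  have hcompletion : ∀ k, ∃ x, IsCompletion r m k x := fun k ↦ exists_isCompletion <|
    (habove k).imp fun y hy l hl ↦
      let ⟨x, hx, hxy⟩ := hy l hl
      ((hm l).2 x hx).trans_lt hxy
  choose x hx using hcompletion
  rw [← card_filter_image_erase_eq_two m Finset.univ (by rw [himage, hcard, Finset.card_univ]),
    himage]
  symm
  refine Finset.card_bij (fun k _ ↦ insert (x k) τ) ?_ ?_ ?_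
  · intro k hk
    have hxτ := (hx k).notMem (Finset.mem_filter.mp hk).2
    simp [Finset.card_insert_of_notMem hxτ, hcard, (hx k).isDominant_insert hm hτ]
  · intro k hk l _ hkl
    have hxkl := (Finset.insert_inj ((hx k).notMem (Finset.mem_filter.mp hk).2)).mp hkl
    obtain ⟨i, hi⟩ := hm.isDominant_iff.mp hτ (x k)
    rw [← (hx k).eq_index hi, ← (hx l).eq_index (hxkl ▸ hi)]
  · intro σ hσ
    obtain ⟨⟨hσcard, hσdom⟩, hτσ⟩ := (Finset.mem_filter.mp hσ).2
    obtain ⟨z, hz, rfl⟩ := Finset.exists_eq_insert_iff.mpr ⟨hτσ, by omega⟩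
    obtain ⟨k, hk, hzk⟩ := hm.exists_isCompletion_of_isDominant_insert hr hcard hz hσdom
    exact ⟨k, by simpa using hk, by rw [(hx k).eq hzk (hr k)]⟩

theorem even_card_dominant_supersets (hr : ∀ i, (r i).Injective) (hne : τ.Nonempty)
    (hcard : #τ + 1 = Fintype.card I) (habove : ∀ k, ∃ y, ∀ l ≠ k, ∃ x ∈ τ, r l x < r l y) :
    Even #{σ : Finset V | (#σ = Fintype.card I ∧ IsDominant r σ) ∧ τ ⊆ σ} := by
  by_cases hτ : IsDominant r τ
  · exact card_dominant_supersets_eq_two hr hne hcard hτ habove ▸ even_two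
  · rw [Finset.filter_false_of_mem fun σ _ hσ ↦ hτ (hσ.1.2.mono hσ.2)]
    exact Even.zero

end Pivoting

theorem even_card_facets_image_eq_erase [Fintype I] [DecidableEq I] [Fintype V] [DecidableEq V]
    {c : V → I} (i₀ : I) (hcard : #σ = Fintype.card I)
    (hc : σ.image c ≠ Finset.univ) :
    Even #{τ : Finset V |
      (#τ + 1 = Fintype.card I ∧ τ.image c = Finset.univ.erase i₀) ∧ τ ⊆ σ} := by
  by_cases h : σ.image c = Finset.univ.erase i₀
  · have hσ : #(σ.image c) + 1 = #σ := by
      rw [h, Finset.card_erase_add_one (Finset.mem_univ i₀), hcard, Finset.card_univ]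
    rw [← h, ← hcard, card_facets_same_image_eq_two hσ]
    exact even_two
  · rw [Finset.filter_false_of_mem]
    · exact Even.zero
    · rintro τ - ⟨⟨-, hτ⟩, hτσ⟩
      have hsub : Finset.univ.erase i₀ ⊆ σ.image c := hτ ▸ Finset.image_subset_image hτσ
      by_cases hi₀ : i₀ ∈ σ.image c
      · exact hc (Finset.eq_univ_of_forall fun i ↦
          (eq_or_ne i i₀).elim (· ▸ hi₀) fun hi ↦ hsub (by simp [hi]))
      · exact h (hsub.antisymm' fun i hi ↦ by
          simpa using fun hii₀ : i = i₀ ↦ hi₀ (hii₀ ▸ hi))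

theorem exists_notMem_range_of_image_eq_erase [Fintype I] [DecidableEq I] [DecidableEq V]
    {c : V → I} {e : I → V} (hc : ∀ i, c (e i) = i) {i₀ : I}
    (hcard : #τ + 1 = Fintype.card I) (himage : τ.image c = Finset.univ.erase i₀)
    (hτ : τ ≠ (Finset.univ.erase i₀).image e) : ∃ v ∈ τ, v ∉ range e := by
  by_contra! h
  have hsub : τ ⊆ (Finset.univ.erase i₀).image e := fun v hv ↦ by
    obtain ⟨k, rfl⟩ := h v hv
    exact Finset.mem_image_of_mem e (himage ▸ hc k ▸ Finset.mem_image_of_mem c hv)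
  refine hτ (Finset.eq_of_subset_of_card_le hsub (Finset.card_image_le.trans ?_))
  rw [Finset.card_erase_of_mem (Finset.mem_univ i₀), Finset.card_univ, ← hcard]
  rfl

/-- The points `e i` act as the vertices of an ambient simplex: `e i` is the least point for `r i`,
and for every other order it lies above all points outside the range of `e`. -/
structure IsSlackFamily {I V α : Type*} [LinearOrder α] (r : I → V → α) (e : I → V) : Prop where
  lt_of_ne : ∀ i v, v ≠ e i → r i (e i) < r i v
  lt_slack : ∀ i j, i ≠ j → ∀ v ∉ range e, r i v < r i (e j)

namespace IsSlackFamily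

variable {e : I → V} (he : IsSlackFamily r e)
include he

theorem le (i : I) (v : V) : r i (e i) ≤ r i v := by
  obtain rfl | hv := eq_or_ne v (e i)
  · exact le_rfl
  · exact (he.lt_of_ne i v hv).le

theorem isDominant_insert_iff [Fintype I] [DecidableEq I] [DecidableEq V] (i₀ : I) (z : V) :
    IsDominant r (insert z ((Finset.univ.erase i₀).image e)) ↔
      ∀ y ∉ range e, r i₀ y ≤ r i₀ z := by
  constructor
  · intro h y hy
    obtain ⟨i, hi⟩ := h y
    obtain rfl : i = i₀ := by
      by_contra hii₀
      refine (he.lt_of_ne i y fun h ↦ hy ⟨i, h.symm⟩).not_ge (hi _ ?_)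
      exact Finset.mem_insert_of_mem (Finset.mem_image_of_mem e (by simp [hii₀]))
    exact hi z (Finset.mem_insert_self _ _)
  · intro h y
    by_cases hy : y ∈ range e
    · obtain ⟨i, rfl⟩ := hy
      exact ⟨i, fun x _ ↦ he.le i x⟩
    · refine ⟨i₀, (Finset.forall_mem_insert _ _ _).mpr ⟨h y hy, fun x hx ↦ ?_⟩⟩
      obtain ⟨j, hj, rfl⟩ := Finset.mem_image.mp hx
      exact (he.lt_slack i₀ j (Finset.ne_of_mem_erase hj).symm y hy).le

theorem card_dominant_supersets_slack_eq_one [Fintype I] [DecidableEq I] [Fintype V]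
    [DecidableEq V] [DecidablePred (IsDominant r)]
    (hr : ∀ i, (r i).Injective) (hinj : e.Injective) (hne : ∃ v, v ∉ range e) (i₀ : I) :
    #{σ : Finset V | (#σ = Fintype.card I ∧ IsDominant r σ) ∧
      (Finset.univ.erase i₀).image e ⊆ σ} = 1 := by
  have hcard : #((Finset.univ.erase i₀).image e) + 1 = Fintype.card I := by
    rw [Finset.card_image_of_injective _ hinj, Finset.card_erase_add_one (Finset.mem_univ i₀),
      Finset.card_univ]
  obtain ⟨x, hx, hmax⟩ := Set.exists_max_image (range e)ᶜ (r i₀) (Set.toFinite _) hne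
  have hxτ : x ∉ (Finset.univ.erase i₀).image e := fun h ↦
    hx (let ⟨j, _, hj⟩ := Finset.mem_image.mp h; ⟨j, hj⟩)
  refine Finset.card_eq_one.mpr ⟨insert x ((Finset.univ.erase i₀).image e), Finset.ext fun σ ↦ ?_⟩
  simp only [Finset.mem_filter, Finset.mem_univ, true_and, Finset.mem_singleton]
  constructor
  · rintro ⟨⟨hσcard, hσ⟩, hτσ⟩
    obtain ⟨z, hz, rfl⟩ := Finset.exists_eq_insert_iff.mpr ⟨hτσ, by omega⟩
    have hle := (he.isDominant_insert_iff i₀ z).mp hσ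
    have hz_range : z ∉ range e := by
      rintro ⟨j, rfl⟩
      obtain rfl : j = i₀ := by
        by_contra hj
        exact hz (Finset.mem_image_of_mem e (by simp [hj]))
      exact (he.lt_of_ne j x fun h ↦ hx ⟨j, h.symm⟩).not_ge (hle x hx)
    rw [hr i₀ ((hmax z hz_range).antisymm (hle x hx))]
  · rintro rfl
    exact ⟨⟨by rw [Finset.card_insert_of_notMem hxτ, hcard],
      (he.isDominant_insert_iff i₀ x).mpr hmax⟩, Finset.subset_insert _ _⟩

theorem odd_sum_card_dominant_supersets [Fintype I] [DecidableEq I] [Fintype V]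
    [DecidableEq V] [DecidablePred (IsDominant r)] (hr : ∀ i, (r i).Injective)
    (hne : ∃ v, v ∉ range e) {c : V → I} (hc : ∀ i, c (e i) = i) (i₀ : I) :
    Odd (∑ τ : Finset V with #τ + 1 = Fintype.card I ∧ τ.image c = Finset.univ.erase i₀,
      #{σ : Finset V | (#σ = Fintype.card I ∧ IsDominant r σ) ∧ τ ⊆ σ}) := by
  have hinj : e.Injective := Function.LeftInverse.injective hc
  have hτ₀ : (Finset.univ.erase i₀).image e ∈ ({τ : Finset V |
      #τ + 1 = Fintype.card I ∧ τ.image c = Finset.univ.erase i₀} : Finset (Finset V)) := by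
    refine Finset.mem_filter.mpr ⟨Finset.mem_univ _, ?_, ?_⟩
    · rw [Finset.card_image_of_injective _ hinj, Finset.card_erase_add_one (Finset.mem_univ i₀),
        Finset.card_univ]
    · rw [Finset.image_image, show c ∘ e = id from funext hc, Finset.image_id]
  rw [← Finset.add_sum_erase _ _ hτ₀, he.card_dominant_supersets_slack_eq_one hr hinj hne]
  refine odd_one.add_even (Finset.even_sum _ fun τ hτ ↦ ?_)
  obtain ⟨hτne, hτ⟩ := Finset.mem_erase.mp hτ
  obtain ⟨hcard, himage⟩ := (Finset.mem_filter.mp hτ).2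
  obtain ⟨v, hvτ, hv⟩ := exists_notMem_range_of_image_eq_erase hc hcard himage hτne
  exact even_card_dominant_supersets hr ⟨v, hvτ⟩ hcard
    fun k ↦ ⟨e k, fun l hl ↦ ⟨v, hvτ, he.lt_slack l k hl v hv⟩⟩

/-- Scarf's combinatorial lemma. -/
theorem exists_isDominant_rainbow [Finite I] [Nonempty I] [Finite V] (hr : ∀ i, (r i).Injective)
    (hne : ∃ v, v ∉ range e) {c : V → I} (hc : ∀ i, c (e i) = i) :
    ∃ σ : Finset V, IsDominant r σ ∧ ∀ i, ∃ v ∈ σ, c v = i := by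
  classical
  have := Fintype.ofFinite I
  have := Fintype.ofFinite V
  by_contra! hrainbow
  obtain ⟨i₀⟩ := ‹Nonempty I›
  -- Count the pairs `τ ⊆ σ` with `σ` dominant of size `|I|` and `τ` a facet of `σ` whose colours
  -- are exactly those other than `i₀`.
  have hcount := Finset.sum_card_bipartiteAbove_eq_sum_card_bipartiteBelow
    (s := {τ : Finset V | #τ + 1 = Fintype.card I ∧ τ.image c = Finset.univ.erase i₀})
    (t := {σ : Finset V | #σ = Fintype.card I ∧ IsDominant r σ}) (fun τ σ ↦ τ ⊆ σ)
  simp only [Finset.bipartiteAbove, Finset.bipartiteBelow, Finset.filter_filter] at hcount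
  refine Nat.not_odd_iff_even.mpr ?_ (he.odd_sum_card_dominant_supersets hr hne hc i₀)
  rw [hcount]
  refine Finset.even_sum _ fun σ hσ ↦ ?_
  obtain ⟨hcard, hdom⟩ := (Finset.mem_filter.mp hσ).2
  obtain ⟨i, hi⟩ := hrainbow σ hdom
  refine even_card_facets_image_eq_erase i₀ hcard fun h ↦ ?_
  obtain ⟨v, hv, hvi⟩ := Finset.mem_image.mp (h ▸ Finset.mem_univ i)
  exact hi v hv hvi

end IsSlackFamily

end Scarf

section TieBreak

variable {V β : Type*} [Finite V]

/-- The injective refinement of a function `h`, in which ties are broken by an enumeration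
of the finite domain. -/
noncomputable def tieBreak (h : V → β) (v : V) : β ×ₗ Fin (Nat.card V) :=
  toLex (h v, Finite.equivFin V v)

theorem tieBreak_injective (h : V → β) : (tieBreak h).Injective := fun _ _ hvw ↦
  (Finite.equivFin V).injective (Prod.ext_iff.mp (toLex.injective hvw)).2

variable [LinearOrder β] {h : V → β} {v w : V}

theorem tieBreak_lt_of_lt (hvw : h v < h w) : tieBreak h v < tieBreak h w :=
  Prod.Lex.toLex_lt_toLex.mpr (.inl hvw)

theorem le_of_tieBreak_le (hvw : tieBreak h v ≤ tieBreak h w) : h v ≤ h w :=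
  not_lt.mp fun hwv ↦ hvw.not_gt (tieBreak_lt_of_lt hwv)

end TieBreak

/-- The points of the simplex `∑ i, x i = 1` with coordinates in `(1 / m) ℤ`, scaled by `m`. -/
abbrev LatticeSimplex (I : Type*) [Fintype I] (m : ℕ) : Type _ := {k : I → ℕ // ∑ i, k i = m}

namespace LatticeSimplex

variable {I : Type*} [Fintype I] {m : ℕ}

instance finite : Finite (LatticeSimplex I m) := by
  classical
  exact (Finset.finite_toSet (Finset.piAntidiag Finset.univ m)).subset fun k hk ↦
    Finset.mem_piAntidiag.mpr ⟨hk, fun i _ ↦ Finset.mem_univ i⟩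

theorem apply_le (k : LatticeSimplex I m) (i : I) : k.1 i ≤ m :=
  (Finset.single_le_sum (fun _ _ ↦ Nat.zero_le _) (Finset.mem_univ i)).trans_eq k.2

theorem exists_ge [Nonempty I] {ν : I → ℕ} (hν : ∑ i, ν i ≤ m) :
    ∃ k : LatticeSimplex I m, ν ≤ k.1 := by
  classical
  obtain ⟨i₀⟩ := ‹Nonempty I›
  refine ⟨⟨ν + Pi.single i₀ (m - ∑ i, ν i), ?_⟩, le_self_add⟩
  simp only [Pi.add_apply, Finset.sum_add_distrib, Finset.sum_pi_single', Finset.mem_univ,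
    if_true, Nat.add_sub_cancel' hν]

instance nonempty [Nonempty I] : Nonempty (LatticeSimplex I m) :=
  (exists_ge (ν := 0) (by simp)).nonempty

/-- The `i`-th height on the lattice simplex extended by one slack point for each `i`. The slack
point `inr i` lies at the bottom of the `i`-th height and at the top of all the others. -/
def height [DecidableEq I] (i : I) : LatticeSimplex I m ⊕ I → ℕ :=
  Sum.elim (fun k ↦ k.1 i + 1) fun j ↦ if i = j then 0 else m + 2

theorem isSlackFamily_tieBreak_height [DecidableEq I] :
    IsSlackFamily (fun i : I ↦ tieBreak (height (m := m) i)) Sum.inr where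
  lt_of_ne i v hv := tieBreak_lt_of_lt <| by
    obtain k | j := v
    · simp [height]
    · have hij : i ≠ j := fun hij ↦ hv (congrArg Sum.inr hij.symm)
      simp [height, hij]
  lt_slack i j hij v hv := tieBreak_lt_of_lt <| by
    obtain k | j' := v
    · simpa [height, hij] using (k.apply_le i).trans_lt m.lt_succ_self
    · exact absurd ⟨j', rfl⟩ hv

theorem exists_rainbow_dominant [Nonempty I] (c : LatticeSimplex I m → I) :
    ∃ (P : Set (LatticeSimplex I m)) (C : Set I), (∀ i ∈ C, ∃ k ∈ P, c k = i) ∧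
      ∀ y : LatticeSimplex I m, ∃ i ∈ C, ∀ k ∈ P, y.1 i ≤ k.1 i := by
  classical
  obtain ⟨k₀⟩ := nonempty (I := I) (m := m)
  obtain ⟨σ, hσ, hrainbow⟩ := isSlackFamily_tieBreak_height.exists_isDominant_rainbow
    (fun i ↦ tieBreak_injective _) ⟨Sum.inl k₀, by simp⟩ (c := Sum.elim c id) fun _ ↦ rfl
  refine ⟨{k | Sum.inl k ∈ σ}, {i | Sum.inr i ∉ σ}, fun i hi ↦ ?_, fun y ↦ ?_⟩
  · obtain ⟨k | j, hv, rfl⟩ := hrainbow i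
    · exact ⟨k, hv, rfl⟩
    · exact absurd hv hi
  · obtain ⟨i, hi⟩ := hσ (Sum.inl y)
    have hle : ∀ v ∈ σ, height i (Sum.inl y) ≤ height i v := fun v hv ↦ le_of_tieBreak_le (hi v hv)
    exact ⟨i, fun hiσ ↦ by simpa [height] using hle _ hiσ,
      fun k hk ↦ Nat.le_of_succ_le_succ (hle _ hk)⟩

theorem exists_rainbow_cell [Nonempty I] (c : LatticeSimplex I m → I) :
    ∃ (P : Set (LatticeSimplex I m)) (ν : I → ℕ), P.Nonempty ∧
      (∀ k ∈ P, ∀ i, ν i ≤ k.1 i ∧ k.1 i ≤ ν i + Fintype.card I) ∧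
      ∀ i, (∃ k ∈ P, c k = i) ∨ ν i = 0 := by
  classical
  obtain ⟨P, C, hC, hdom⟩ := exists_rainbow_dominant c
  have hP : P.Nonempty := by
    obtain ⟨i, hi, -⟩ := hdom (Classical.arbitrary _)
    exact (hC i hi).imp fun _ ↦ And.left
  choose p hpP hpmin using fun i ↦ Set.exists_min_image P (fun k ↦ k.1 i) P.toFinite hP
  set ν : I → ℕ := fun i ↦ if i ∈ C then (p i).1 i else 0 with hν
  have hle : ∀ k ∈ P, ∀ i, ν i ≤ k.1 i := fun k hk i ↦ by
    by_cases hi : i ∈ C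
    · simpa only [hν, if_pos hi] using hpmin i k hk
    · simp only [hν, if_neg hi, Nat.zero_le]
  -- Otherwise some lattice point lies strictly above the minima of `P` in every direction of `C`.
  have hsum : m < ∑ i, (ν i + 1) := by
    by_contra! hm
    obtain ⟨y, hy⟩ := exists_ge hm
    obtain ⟨i, hi, hyi⟩ := hdom y
    have hyp := (hy i).trans (hyi (p i) (hpP i))
    simp only [hν, if_pos hi] at hyp
    omega
  refine ⟨P, ν, hP, fun k hk i ↦ ⟨hle k hk i, ?_⟩, fun i ↦ ?_⟩
  · have hdiff : k.1 i - ν i ≤ ∑ j, (k.1 j - ν j) :=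
      Finset.single_le_sum (f := fun j ↦ k.1 j - ν j) (fun _ _ ↦ Nat.zero_le _) (Finset.mem_univ i)
    rw [Finset.sum_tsub_distrib _ fun j _ ↦ hle k hk j, k.2] at hdiff
    rw [Finset.sum_add_distrib, Finset.sum_const, Finset.card_univ, smul_eq_mul, mul_one] at hsum
    omega
  · by_cases hi : i ∈ C
    · exact .inl (hC i hi)
    · exact .inr (if_neg hi)

end LatticeSimplex

section Brouwer

namespace LatticeSimplex

variable {I : Type*} [Fintype I] {m : ℕ}

/-- The point `k / m` of the standard simplex. -/
noncomputable def toStdSimplex [NeZero m] (k : LatticeSimplex I m) : stdSimplex ℝ I :=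
  ⟨fun i ↦ k.1 i / m, fun _ ↦ by positivity, by
    rw [← Finset.sum_div, ← Nat.cast_sum, k.2, div_self (NeZero.ne _)]⟩

theorem toStdSimplex_apply [NeZero m] (k : LatticeSimplex I m) (i : I) :
    k.toStdSimplex i = k.1 i / m := rfl

theorem dist_toStdSimplex_le [NeZero m] {n : ℕ} {ν : I → ℕ} {k l : LatticeSimplex I m}
    (hk : ∀ i, ν i ≤ k.1 i ∧ k.1 i ≤ ν i + n) (hl : ∀ i, ν i ≤ l.1 i ∧ l.1 i ≤ ν i + n) :
    dist k.toStdSimplex l.toStdSimplex ≤ n / m := by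
  refine (dist_pi_le_iff (by positivity)).mpr fun i ↦ ?_
  change dist ((k.1 i : ℝ) / m) (l.1 i / m) ≤ n / m
  have hkl : |(k.1 i : ℝ) - l.1 i| ≤ n := by
    have hki := hk i
    have hli := hl i
    rw [abs_le, neg_le_sub_iff_le_add, sub_le_iff_le_add]
    constructor <;> norm_cast <;> omega
  rw [Real.dist_eq, ← sub_div, abs_div, Nat.abs_cast]
  gcongr

end LatticeSimplex

variable {I : Type*} [Fintype I]

theorem exists_stdSimplex_apply_le [Nonempty I] (x y : stdSimplex ℝ I) : ∃ i, x i ≤ y i := by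
  obtain ⟨i, -, hi⟩ := Finset.exists_le_of_sum_le (s := Finset.univ) (f := x) (g := y)
    Finset.univ_nonempty (by rw [stdSimplex.sum_eq_one, stdSimplex.sum_eq_one])
  exact ⟨i, hi⟩

theorem stdSimplex_dist_le_of_forall_le_add {x y : stdSimplex ℝ I} {η : ℝ} (hη : 0 ≤ η)
    (h : ∀ i, x i ≤ y i + η) : dist y x ≤ Fintype.card I * η := by
  refine (dist_pi_le_iff (by positivity)).mpr fun i ↦ abs_sub_le_iff.mpr ⟨?_, ?_⟩
  · calc y i - x i ≤ y i + η - x i := by linarith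
      _ ≤ ∑ j, (y j + η - x j) :=
        Finset.single_le_sum (f := fun j ↦ y j + η - x j) (fun j _ ↦ sub_nonneg.mpr (h j))
          (Finset.mem_univ i)
      _ = Fintype.card I * η := by
        simp [Finset.sum_sub_distrib, Finset.sum_add_distrib]
  · have hcard : (1 : ℝ) ≤ Fintype.card I := by exact_mod_cast Fintype.card_pos_iff.mpr ⟨i⟩
    calc x i - y i ≤ η := sub_le_iff_le_add'.mpr (h i)
      _ ≤ Fintype.card I * η := le_mul_of_one_le_left hη hcard

theorem exists_stdSimplex_forall_le_apply_add [Nonempty I] {f : stdSimplex ℝ I → stdSimplex ℝ I}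
    (hf : Continuous f) {η : ℝ} (hη : 0 < η) : ∃ x, ∀ i, x i ≤ f x i + η := by
  have hf_apply : ∀ i x y, f x i ≤ f y i + dist (f x) (f y) := fun i x y ↦
    sub_le_iff_le_add'.mp ((le_abs_self _).trans (dist_le_pi_dist (f x).1 (f y).1 i))
  obtain ⟨δ, hδ, hfδ⟩ := Metric.uniformContinuous_iff.mp
    (CompactSpace.uniformContinuous_of_continuous hf) (η / 2) (half_pos hη)
  obtain ⟨m, hm⟩ := exists_nat_gt (Fintype.card I / min δ (η / 2) : ℝ)
  have hmpos : (0 : ℝ) < m := lt_of_le_of_lt (by positivity) hm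
  have : NeZero m := ⟨by rintro rfl; simp at hmpos⟩
  have hmesh : Fintype.card I / m < min δ (η / 2) := (div_lt_comm₀ (by positivity) hmpos).mp hm
  choose c hc using fun k : LatticeSimplex I m ↦
    exists_stdSimplex_apply_le k.toStdSimplex (f k.toStdSimplex)
  obtain ⟨P, ν, ⟨k, hk⟩, hν, hrainbow⟩ := LatticeSimplex.exists_rainbow_cell c
  have hnear : ∀ i, ∀ l : LatticeSimplex I m, l.1 i ≤ ν i + Fintype.card I →
      l.toStdSimplex i ≤ ν i / m + η / 2 := fun i l hl ↦ by
    rw [LatticeSimplex.toStdSimplex_apply]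
    calc (l.1 i : ℝ) / m ≤ (ν i + Fintype.card I : ℕ) / m := by gcongr
      _ = ν i / m + Fintype.card I / m := by push_cast; ring
      _ ≤ ν i / m + η / 2 := by exact add_le_add_right (hmesh.le.trans (min_le_right _ _)) _
  refine ⟨k.toStdSimplex, fun i ↦ ?_⟩
  have hki := hnear i k (hν k hk i).2
  obtain ⟨l, hl, rfl⟩ | hνi := hrainbow i
  · have hkl : dist (f l.toStdSimplex) (f k.toStdSimplex) < η / 2 := hfδ <|
      (LatticeSimplex.dist_toStdSimplex_le (hν l hl) (hν k hk)).trans_lt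
        (hmesh.trans_le (min_le_left _ _))
    have hνl : (ν (c l) : ℝ) / m ≤ l.toStdSimplex (c l) := by
      rw [LatticeSimplex.toStdSimplex_apply]; gcongr; exact (hν l hl _).1
    linarith [hc l, hf_apply (c l) l.toStdSimplex k.toStdSimplex]
  · rw [hνi, Nat.cast_zero, zero_div] at hki
    linarith [stdSimplex.zero_le (f k.toStdSimplex) i]

theorem exists_fixedPoint_of_forall_exists_dist_le {Y : Type*} [MetricSpace Y] {T : Y → Y}
    {C K : Set Y} (hT : ContinuousOn T C) (hK : IsCompact K) (hKC : K ⊆ C) (hmaps : MapsTo T C K)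
    (happrox : ∀ ε > 0, ∃ y ∈ C, dist (T y) y ≤ ε) : ∃ y ∈ C, T y = y := by
  choose y hyC hy using fun n : ℕ ↦ happrox (1 / (n + 1)) Nat.one_div_pos_of_nat
  obtain ⟨z, hzK, φ, hφ, hlim⟩ := hK.tendsto_subseq fun n ↦ hmaps (hyC n)
  have hdist : Filter.Tendsto (fun n ↦ dist (T (y (φ n))) (y (φ n))) .atTop (nhds 0) :=
    (squeeze_zero (fun _ ↦ dist_nonneg) hy tendsto_one_div_add_atTop_nhds_zero_nat).comp
      hφ.tendsto_atTop
  have hylim : Filter.Tendsto (y ∘ φ) .atTop (nhds z) := hlim.congr_dist hdist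
  have hTlim : Filter.Tendsto (T ∘ y ∘ φ) .atTop (nhds (T z)) := (hT z (hKC hzK)).tendsto.comp <|
    tendsto_nhdsWithin_iff.mpr ⟨hylim, .of_forall fun n ↦ hyC (φ n)⟩
  exact ⟨z, hKC hzK, tendsto_nhds_unique hTlim hlim⟩

/-- Brouwer's fixed point theorem. -/
theorem exists_fixedPoint_stdSimplex {I : Type*} [Fintype I] [Nonempty I]
    {f : stdSimplex ℝ I → stdSimplex ℝ I} (hf : Continuous f) : ∃ x, f x = x := by
  have happrox : ∀ ε > 0, ∃ x ∈ univ, dist (f x) x ≤ ε := fun ε hε ↦ by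
    have hcard : (0 : ℝ) < Fintype.card I := by exact_mod_cast Fintype.card_pos
    obtain ⟨x, hx⟩ := exists_stdSimplex_forall_le_apply_add hf (div_pos hε hcard)
    refine ⟨x, mem_univ x, ?_⟩
    exact (stdSimplex_dist_le_of_forall_le_add (by positivity) hx).trans_eq
      (mul_div_cancel₀ ε hcard.ne')
  obtain ⟨x, -, hx⟩ := exists_fixedPoint_of_forall_exists_dist_le hf.continuousOn isCompact_univ
    subset_rfl (mapsTo_univ f univ) happrox
  exact ⟨x, hx⟩

end Brouwer

section Schauder

variable {Y : Type*} [NormedAddCommGroup Y] [NormedSpace ℝ Y]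

theorem exists_continuous_stdSimplex_of_sum_pos {Z ι : Type*} [TopologicalSpace Z] [Fintype ι]
    {g : Z → ι → ℝ} (hg : Continuous g) (hnonneg : ∀ z i, 0 ≤ g z i) (hpos : ∀ z, 0 < ∑ i, g z i) :
    ∃ w : Z → stdSimplex ℝ ι, Continuous w ∧ ∀ z i, w z i = g z i / ∑ j, g z j := by
  refine ⟨fun z ↦ ⟨fun i ↦ g z i / ∑ j, g z j, fun i ↦ div_nonneg (hnonneg z i) (hpos z).le, ?_⟩,
    ?_, fun _ _ ↦ rfl⟩
  · rw [← Finset.sum_div, div_self (hpos z).ne']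
  · refine Continuous.subtype_mk (continuous_pi fun i ↦ ?_) _
    exact ((continuous_apply i).comp hg).div
      (continuous_finsetSum _ fun j _ ↦ (continuous_apply j).comp hg) fun z ↦ (hpos z).ne'

theorem norm_stdSimplex_sum_smul_sub_le {ι : Type*} [Fintype ι] {w : stdSimplex ℝ ι} {p : ι → Y}
    {y : Y} {ε : ℝ} (h : ∀ i, w i ≠ 0 → dist (p i) y ≤ ε) : ‖∑ i, w i • p i - y‖ ≤ ε :=
  calc ‖∑ i, w i • p i - y‖ = ‖∑ i, w i • (p i - y)‖ := by
        simp only [smul_sub, Finset.sum_sub_distrib]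
        rw [← Finset.sum_smul, stdSimplex.sum_eq_one, one_smul]
    _ ≤ ∑ i, w i * ε := norm_sum_le_of_le _ fun i _ ↦ by
        rw [norm_smul, Real.norm_of_nonneg (stdSimplex.zero_le w i)]
        obtain hi | hi := eq_or_ne (w i) 0
        · rw [hi, zero_mul, zero_mul]
        · gcongr
          · exact stdSimplex.zero_le w i
          · exact dist_eq_norm (p i) y ▸ h i hi
    _ = ε := by rw [← Finset.sum_mul, stdSimplex.sum_eq_one, one_mul]

/-- The Schauder projection of a compact set onto the convex hull of an `ε`-net, in barycentric
coordinates. -/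
theorem exists_schauder_projection {K : Set Y} (hK : IsCompact K) {ε : ℝ} (hε : 0 < ε) :
    ∃ (t : Finset Y) (w : K → stdSimplex ℝ t), ↑t ⊆ K ∧ Continuous w ∧
      ∀ y : K, ‖∑ i, w y i • (i : Y) - y‖ ≤ ε := by
  obtain ⟨t, htK, ht, hcover⟩ := hK.finite_cover_balls hε
  lift t to Finset Y using ht
  let g : K → t → ℝ := fun y i ↦ max 0 (ε - dist (i : Y) y)
  have hnonneg : ∀ y i, 0 ≤ g y i := fun _ _ ↦ le_max_left _ _
  have hpos : ∀ y, 0 < ∑ i, g y i := fun y ↦ by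
    obtain ⟨i, hi, hyi⟩ := mem_iUnion₂.mp (hcover y.2)
    exact Finset.sum_pos' (fun i _ ↦ hnonneg y i) ⟨⟨i, hi⟩, Finset.mem_univ _,
      lt_max_of_lt_right (sub_pos.mpr (Metric.mem_ball'.mp hyi))⟩
  obtain ⟨w, hw, hwg⟩ := exists_continuous_stdSimplex_of_sum_pos (g := g) (by fun_prop) hnonneg hpos
  refine ⟨t, w, htK, hw, fun y ↦ norm_stdSimplex_sum_smul_sub_le fun i hi ↦ ?_⟩
  contrapose! hi
  rw [hwg, show g y i = 0 from max_eq_left (sub_nonpos.mpr hi.le), zero_div]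

/-- Schauder's fixed point theorem. -/
theorem exists_fixedPoint_of_convex {C K : Set Y} {T : Y → Y} (hC : Convex ℝ C)
    (hne : C.Nonempty) (hT : ContinuousOn T C) (hK : IsCompact K) (hKC : K ⊆ C)
    (hmaps : MapsTo T C K) : ∃ y ∈ C, T y = y := by
  refine exists_fixedPoint_of_forall_exists_dist_le hT hK hKC hmaps fun ε hε ↦ ?_
  obtain ⟨t, w, htK, hw, hproj⟩ := exists_schauder_projection hK hε
  let s : stdSimplex ℝ t → Y := fun v ↦ ∑ i, v i • (i : Y)
  have hs : Continuous s := continuous_finsetSum _ fun i _ ↦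
    ((continuous_apply i).comp continuous_subtype_val).smul continuous_const
  have hsC : ∀ v, s v ∈ C := fun v ↦ hC.sum_mem (fun i _ ↦ stdSimplex.zero_le v i)
    (stdSimplex.sum_eq_one v) fun i _ ↦ hKC (htK i.2)
  let f : stdSimplex ℝ t → stdSimplex ℝ t := fun v ↦ w ⟨T (s v), hmaps (hsC v)⟩
  have hf : Continuous f := hw.comp ((hT.comp_continuous hs hsC).subtype_mk _)
  have : Nonempty t := by
    obtain ⟨y, hy⟩ := hne
    by_contra! hempty
    simpa using stdSimplex.sum_eq_one (w ⟨T y, hmaps hy⟩)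
  obtain ⟨v, hv⟩ := exists_fixedPoint_stdSimplex hf
  refine ⟨s v, hsC v, ?_⟩
  have hfv := hproj ⟨T (s v), hmaps (hsC v)⟩
  rw [dist_comm, dist_eq_norm]
  rwa [show w ⟨T (s v), hmaps (hsC v)⟩ = v from hv] at hfv

end Schauder

section Continuation

theorem exists_isClopen_of_connectedComponent_subset {E : Type*} [TopologicalSpace E]
    [CompactSpace E] [T2Space E] {x : E} {U : Set E} (hU : IsOpen U)
    (h : connectedComponent x ⊆ U) : ∃ V, IsClopen V ∧ x ∈ V ∧ V ⊆ U := by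
  rw [connectedComponent_eq_iInter_isClopen] at h
  have : Nonempty {V : Set E // IsClopen V ∧ x ∈ V} := ⟨univ, isClopen_univ, mem_univ x⟩
  obtain ⟨⟨V, hV, hxV⟩, hVU⟩ := exists_subset_nhds_of_compactSpace
    (fun V W ↦ ⟨⟨V.1 ∩ W.1, V.2.1.inter W.2.1, V.2.2, W.2.2⟩, inter_subset_left,
      inter_subset_right⟩)
    (fun V ↦ V.2.1.1) fun y hy ↦ hU.mem_nhds (h hy)
  exact ⟨V, hV, hxV, hVU⟩

theorem exists_continuous_of_connectedComponentIn_subset {E : Type*} [TopologicalSpace E]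
    [T4Space E] {K U : Set E} {x : E} (hK : IsCompact K) (hx : x ∈ K) (hU : IsOpen U)
    (h : connectedComponentIn K x ⊆ U) :
    ∃ φ : C(E, ℝ), φ x = 1 ∧ EqOn φ 0 Uᶜ ∧ (∀ y ∈ K, φ y = 0 ∨ φ y = 1) ∧
      ∀ y, φ y ∈ Icc (0 : ℝ) 1 := by
  have := isCompact_iff_compactSpace.mp hK
  rw [connectedComponentIn_eq_image hx, image_subset_iff] at h
  obtain ⟨V, hV, hxV, hVU⟩ :=
    exists_isClopen_of_connectedComponent_subset (hU.preimage continuous_subtype_val) h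
  have isClosed_image : ∀ W : Set K, IsClosed W → IsClosed (Subtype.val '' W) := fun W hW ↦
    (hW.isCompact.image continuous_subtype_val).isClosed
  have hdisj : Disjoint (Subtype.val '' Vᶜ ∪ Uᶜ) (Subtype.val '' V) :=
    .union_left ((disjoint_image_iff Subtype.val_injective).mpr disjoint_compl_left)
      (disjoint_compl_left.mono_right (image_subset_iff.mpr hVU))
  obtain ⟨φ, hφ₀, hφ₁, hφ⟩ := exists_continuous_zero_one_of_isClosed
    ((isClosed_image _ hV.compl.1).union hU.isClosed_compl) (isClosed_image V hV.1) hdisj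
  refine ⟨φ, hφ₁ ⟨_, hxV, rfl⟩, hφ₀.mono subset_union_right, fun y hy ↦ ?_, hφ⟩
  by_cases hyV : ⟨y, hy⟩ ∈ V
  · exact .inr (hφ₁ ⟨_, hyV, rfl⟩)
  · exact .inl (hφ₀ (.inl ⟨_, hyV, rfl⟩))

theorem exists_continuous_of_isBounded_connectedComponentIn {E : Type*} [MetricSpace E]
    {Z : Set E} {x : E} (hZ : ∀ R, IsCompact (Z ∩ Metric.closedBall x R)) (hx : x ∈ Z)
    (hbounded : IsBounded (connectedComponentIn Z x)) :
    ∃ (B : Set E) (φ : C(E, ℝ)), IsBounded B ∧ φ x = 1 ∧ EqOn φ 0 Bᶜ ∧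
      (∀ y ∈ Z, φ y = 0 ∨ φ y = 1) ∧ ∀ y, φ y ∈ Icc (0 : ℝ) 1 := by
  obtain ⟨R, hR⟩ := hbounded.subset_ball x
  obtain ⟨φ, hφx, hφR, hφZ, hφ⟩ := exists_continuous_of_connectedComponentIn_subset (hZ R)
    ⟨hx, Metric.ball_subset_closedBall (hR (mem_connectedComponentIn hx))⟩ Metric.isOpen_ball
    ((connectedComponentIn_mono _ inter_subset_left).trans hR)
  refine ⟨Metric.ball x R, φ, Metric.isBounded_ball, hφx, hφR, fun y hy ↦ ?_, hφ⟩
  by_cases hyR : y ∈ Metric.ball x R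
  · exact hφZ y ⟨hy, Metric.ball_subset_closedBall hyR⟩
  · exact .inl (hφR hyR)

theorem isCompact_solutions_inter {Λ X : Type*} [NormedAddCommGroup Λ] [ProperSpace Λ]
    [NormedAddCommGroup X] {G : Λ × X → X} (hG : Continuous G)
    (hGcompact : ∀ B : Set (Λ × X), IsBounded B → IsCompact (closure (G '' B)))
    {B : Set (Λ × X)} (hB : IsBounded B) (hBclosed : IsClosed B) :
    IsCompact ({p | G p = p.2} ∩ B) :=
  (hB.image_fst.isCompact_closure.prod (hGcompact B hB)).of_isClosed_subset
    ((isClosed_eq hG continuous_snd).inter hBclosed) fun p hp ↦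
      ⟨subset_closure (mem_image_of_mem _ hp.2), subset_closure ⟨p, hp.2, hp.1⟩⟩

variable {Λ X : Type*} [NormedAddCommGroup Λ] [NormedSpace ℝ Λ] [ProperSpace Λ]
  [NormedAddCommGroup X] [NormedSpace ℝ X] {G : Λ × X → X} {l₀ : Λ} {u₀ : X}

theorem exists_solution_fst_eq (hG : Continuous G)
    (hGcompact : ∀ B : Set (Λ × X), IsBounded B → IsCompact (closure (G '' B)))
    (hG₀ : ∀ u, G (l₀, u) = u₀) {ψ : Λ × X → Λ} (hψ : Continuous ψ) (hψrange : IsBounded (range ψ))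
    {B : Set (Λ × X)} (hB : IsBounded B) (hψB : ∀ p ∉ B, ψ p = l₀) :
    ∃ p, G p = p.2 ∧ ψ p = p.1 := by
  let T : Λ × X → Λ × X := fun p ↦ (ψ p, G (ψ p, p.2))
  have hT : Continuous T := hψ.prodMk (hG.comp (hψ.prodMk continuous_snd))
  have hK : IsCompact (closure (range ψ) ×ˢ
      insert u₀ (closure (G '' (range ψ ×ˢ (Prod.snd '' B))))) :=
    hψrange.isCompact_closure.prod ((hGcompact _ (hψrange.prod hB.image_snd)).insert u₀)
  have hmaps : MapsTo T univ (closure (range ψ) ×ˢ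
      insert u₀ (closure (G '' (range ψ ×ˢ (Prod.snd '' B))))) := by
    refine fun p _ ↦ ⟨subset_closure ⟨p, rfl⟩, ?_⟩
    by_cases hpB : p ∈ B
    · exact .inr (subset_closure ⟨(ψ p, p.2), ⟨⟨p, rfl⟩, ⟨p, hpB, rfl⟩⟩, rfl⟩)
    · exact .inl (show G (ψ p, p.2) = u₀ by rw [hψB p hpB, hG₀])
  obtain ⟨p, -, hp⟩ := exists_fixedPoint_of_convex convex_univ univ_nonempty hT.continuousOn hK
    (subset_univ _) hmaps
  obtain ⟨hp₁, hp₂⟩ : ψ p = p.1 ∧ G (ψ p, p.2) = p.2 := Prod.ext_iff.mp hp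
  exact ⟨p, by rwa [hp₁] at hp₂, hp₁⟩

/-- The path `γ` witnesses that `A` extends from `l₀` to infinity. -/
theorem not_isBounded_connectedComponentIn_solutions (hG : Continuous G)
    (hGcompact : ∀ B : Set (Λ × X), IsBounded B → IsCompact (closure (G '' B)))
    (hG₀ : ∀ u, G (l₀, u) = u₀) {A : Set Λ} (hA : IsClosed A) {γ : ℝ → Λ} (hγ : Continuous γ)
    (hγ₀ : γ 0 = l₀) (hγA : ∀ t, 0 ≤ t → γ t ∈ A)
    (hγtop : Filter.Tendsto γ .atTop (cobounded Λ)) :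
    ¬ IsBounded (connectedComponentIn ({p | G p = p.2} ∩ A ×ˢ univ) (l₀, u₀)) := by
  intro hbounded
  set Z : Set (Λ × X) := {p | G p = p.2} ∩ A ×ˢ univ
  have hx : (l₀, u₀) ∈ Z := ⟨hG₀ u₀, hγ₀ ▸ hγA 0 le_rfl, mem_univ u₀⟩
  have hZ : ∀ R, IsCompact (Z ∩ Metric.closedBall (l₀, u₀) R) := fun R ↦ by
    rw [inter_assoc]
    exact isCompact_solutions_inter hG hGcompact (Metric.isBounded_closedBall.subset
      inter_subset_right) ((hA.prod isClosed_univ).inter Metric.isClosed_closedBall)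
  obtain ⟨B, φ, hB, hφx, hφB, hφZ, hφ⟩ :=
    exists_continuous_of_isBounded_connectedComponentIn hZ hx hbounded
  obtain ⟨M, hMB, hM⟩ :=
    ((hγtop.eventually hB.image_fst).and (Filter.eventually_ge_atTop 0)).exists
  have hrange : IsBounded (range fun p ↦ γ (M * φ p)) := by
    refine (isCompact_Icc.image hγ).isBounded.subset (range_subset_iff.mpr fun p ↦
      mem_image_of_mem γ (?_ : M * φ p ∈ Icc 0 M))
    exact ⟨mul_nonneg hM (hφ p).1, mul_le_of_le_one_right hM (hφ p).2⟩
  obtain ⟨p, hp, hp₁⟩ := exists_solution_fst_eq hG hGcompact hG₀ (by fun_prop) hrange hB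
    fun p hp ↦ by rw [hφB hp, Pi.zero_apply, mul_zero, hγ₀]
  obtain hφp | hφp := hφZ p ⟨hp, hp₁ ▸ hγA _ (mul_nonneg hM (hφ p).1), mem_univ p.2⟩
  · rw [hφp, mul_zero, hγ₀] at hp₁
    have hpx : p = (l₀, u₀) := Prod.ext hp₁.symm (by rw [← hp, ← hG₀ p.2, hp₁])
    exact zero_ne_one (hφp.symm.trans (hpx ▸ hφx))
  · rw [hφp, mul_one] at hp₁
    have hpB : p ∈ B := by
      by_contra hpB
      exact zero_ne_one ((hφB hpB).symm.trans hφp)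
    exact hMB ⟨p, hpB, hp₁.symm⟩

end Continuation

theorem closure_sep_ne_union_singleton {E : Type*} [TopologicalSpace E] {Z : Set E} {x : E}
    (hZ : IsClosed Z) (hx : x ∈ Z) : closure {p | p ∈ Z ∧ p ≠ x} ∪ {x} = Z := by
  refine Subset.antisymm (union_subset (closure_minimal (fun p hp ↦ hp.1) hZ)
    (singleton_subset_iff.mpr hx)) fun p hp ↦ ?_
  by_cases hpx : p = x
  · exact .inr hpx
  · exact .inl (subset_closure ⟨hp, hpx⟩)

theorem connectedComponentIn_inter_eq_singleton {E : Type*} [TopologicalSpace E] {A B : Set E}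
    {x : E} (h : A ∩ B = {x}) : connectedComponentIn A x ∩ connectedComponentIn B x = {x} := by
  have hx : x ∈ A ∩ B := h ▸ mem_singleton x
  refine Subset.antisymm ?_ (singleton_subset_iff.mpr
    ⟨mem_connectedComponentIn hx.1, mem_connectedComponentIn hx.2⟩)
  exact h ▸ inter_subset_inter (connectedComponentIn_subset A x) (connectedComponentIn_subset B x)

theorem global_continuation_compact_general {X : Type*}
    [NormedAddCommGroup X] [NormedSpace ℝ X]
    (G : ℝ × X → X) (hGcont : Continuous G)
    (hGcompact : ∀ B : Set (ℝ × X), IsBounded B → IsCompact (closure (G '' B)))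
    (l₀ : ℝ) (u₀ : X)
    (hG : ∀ u : X, G (l₀, u) = u₀) :
    let F : ℝ × X → X := fun p => p.2 - G p
    let S : Set (ℝ × X) :=
      closure {p : ℝ × X | F p = 0 ∧ p ≠ (l₀, u₀)} ∪ {(l₀, u₀)}
    let Cp : Set (ℝ × X) :=
      connectedComponentIn (S ∩ (Set.Ici l₀ ×ˢ (Set.univ : Set X))) (l₀, u₀)
    let Cm : Set (ℝ × X) :=
      connectedComponentIn (S ∩ (Set.Iic l₀ ×ˢ (Set.univ : Set X))) (l₀, u₀)
    ¬ IsBounded Cp ∧ ¬ IsBounded Cm ∧ Cp ∩ Cm = {(l₀, u₀)} := by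
  intro F S Cp Cm
  have hS : S = {p | G p = p.2} := by
    simp only [S, F, sub_eq_zero, eq_comm (a := Prod.snd _)]
    exact closure_sep_ne_union_singleton (isClosed_eq hGcont continuous_snd) (hG u₀)
  simp only [Cp, Cm, hS]
  refine ⟨?_, ?_, connectedComponentIn_inter_eq_singleton ?_⟩
  · exact not_isBounded_connectedComponentIn_solutions hGcont hGcompact hG isClosed_Ici
      (continuous_const_add l₀) (add_zero l₀) (fun t ht ↦ le_add_of_nonneg_right ht)
      ((Filter.tendsto_atTop_add_const_left _ l₀ Filter.tendsto_id).mono_right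
        IsOrderBornology.atTop_le_cobounded)
  · exact not_isBounded_connectedComponentIn_solutions hGcont hGcompact hG isClosed_Iic
      (continuous_const_add l₀ |>.comp continuous_neg) (by simp) (fun t ht ↦ by simpa using ht)
      ((Filter.tendsto_atBot_add_const_left _ l₀ Filter.tendsto_neg_atTop_atBot).mono_right
        IsOrderBornology.atBot_le_cobounded)
  · ext ⟨l, u⟩
    constructor
    · rintro ⟨⟨hsol, hl, -⟩, -, hl', -⟩
      obtain rfl : l = l₀ := le_antisymm hl' hl
      exact Prod.ext rfl (hsol.symm.trans (hG u))
    · rintro ⟨⟩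
      exact ⟨⟨hG u₀, self_mem_Ici, mem_univ u₀⟩, hG u₀, self_mem_Iic, mem_univ u₀⟩

/-- Rabinowitz's global continuation theorem for compact perturbations of the identity. -/
theorem global_continuation_compact {X : Type*}
    [NormedAddCommGroup X] [NormedSpace ℝ X] [CompleteSpace X]
    (G : ℝ × X → X) (hGcont : Continuous G)
    (hGcompact : ∀ B : Set (ℝ × X), IsBounded B → IsCompact (closure (G '' B)))
    (l₀ : ℝ) (u₀ : X)
    (hG : ∀ u : X, G (l₀, u) = u₀) :
    let F : ℝ × X → X := fun p => p.2 - G p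
    let S : Set (ℝ × X) :=
      closure {p : ℝ × X | F p = 0 ∧ p ≠ (l₀, u₀)} ∪ {(l₀, u₀)}
    let Cp : Set (ℝ × X) :=
      connectedComponentIn (S ∩ (Set.Ici l₀ ×ˢ (Set.univ : Set X))) (l₀, u₀)
    let Cm : Set (ℝ × X) :=
      connectedComponentIn (S ∩ (Set.Iic l₀ ×ˢ (Set.univ : Set X))) (l₀, u₀)
    ¬ IsBounded Cp ∧ ¬ IsBounded Cm ∧ Cp ∩ Cm = {(l₀, u₀)} :=
  global_continuation_compact_general G hGcont hGcompact l₀ u₀ hG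
end

section
/- Let K be a compact metric space and let A and B be disjoint closed subsets of K. Then either there exists a sub-continuum of K (a compact connected subset of K) meeting both A and B, or K = K_A ∪ K_B, where K_A and K_B are disjoint compact subsets of K containing A and B, respectively. -/
open Set

/-!
The space of connected components of a compact Hausdorff space is compact, Hausdorff and totally
disconnected, so that disjoint closed subsets of it are separated by a clopen set. If no component
meets both `A` and `B`, their images in this space are such a pair, and the separating clopen set
pulls back to the original space.
-/

section

variable {X : Type*} [TopologicalSpace X] {A B : Set X}

theorem disjoint_image_connectedComponents_iff :
    Disjoint (ConnectedComponents.mk '' A) (ConnectedComponents.mk '' B) ↔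
      ∀ a ∈ A, Disjoint (connectedComponent a) B := by
  rw [disjoint_image_right, connectedComponents_preimage_image, disjoint_iUnion₂_left]

variable [CompactSpace X] [T2Space X]

theorem exists_isClopen_of_disjoint_connectedComponent (hA : IsClosed A) (hB : IsClosed B)
    (hdisj : ∀ a ∈ A, Disjoint (connectedComponent a) B) :
    ∃ U : Set X, IsClopen U ∧ A ⊆ U ∧ B ⊆ Uᶜ := by
  have hmk : Continuous (ConnectedComponents.mk : X → ConnectedComponents X) :=
    ConnectedComponents.continuous_coe
  have himage : ConnectedComponents.mk '' A ⊆ (ConnectedComponents.mk '' B)ᶜ :=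
    (disjoint_image_connectedComponents_iff.2 hdisj).subset_compl_right
  obtain ⟨V, hV, hAV, hVB⟩ := exists_clopen_of_closed_subset_open
    (hmk.isClosedMap A hA) (hmk.isClosedMap B hB).isOpen_compl himage
  exact ⟨ConnectedComponents.mk ⁻¹' V, hV.preimage hmk, image_subset_iff.1 hAV,
    image_subset_iff.1 (subset_compl_comm.1 hVB)⟩

end

theorem whyburn_lemma_general {X : Type*} [TopologicalSpace X] [CompactSpace X] [T2Space X]
    {A B : Set X} (hA : IsClosed A) (hB : IsClosed B) :
    (∃ C : Set X, IsCompact C ∧ IsConnected C ∧ (C ∩ A).Nonempty ∧ (C ∩ B).Nonempty) ∨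
    (∃ KA KB : Set X, IsCompact KA ∧ IsCompact KB ∧ Disjoint KA KB ∧
      A ⊆ KA ∧ B ⊆ KB ∧ KA ∪ KB = univ) := by
  by_cases hdisj : ∀ a ∈ A, Disjoint (connectedComponent a) B
  · obtain ⟨U, hU, hAU, hBU⟩ := exists_isClopen_of_disjoint_connectedComponent hA hB hdisj
    exact .inr ⟨U, Uᶜ, hU.isClosed.isCompact, hU.compl.isClosed.isCompact, disjoint_compl_right,
      hAU, hBU, union_compl_self U⟩
  · push Not at hdisj
    obtain ⟨a, haA, hmeet⟩ := hdisj
    exact .inl ⟨connectedComponent a, isClosed_connectedComponent.isCompact,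
      isConnected_connectedComponent, ⟨a, mem_connectedComponent, haA⟩,
      not_disjoint_iff_nonempty_inter.1 hmeet⟩

/-- Whyburn's lemma: in a compact metric space `K`, for disjoint closed sets `A` and `B`,
either some sub-continuum of `K` meets both `A` and `B`, or `K` splits as the union of two
disjoint compact sets containing `A` and `B` respectively. -/
theorem whyburn_lemma {K : Type*} [MetricSpace K] [CompactSpace K]
    (A B : Set K) (hA : IsClosed A) (hB : IsClosed B) (hAB : Disjoint A B) :
    (∃ C : Set K, IsCompact C ∧ IsConnected C ∧ (C ∩ A).Nonempty ∧ (C ∩ B).Nonempty) ∨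
    (∃ KA KB : Set K, IsCompact KA ∧ IsCompact KB ∧ Disjoint KA KB ∧
      A ⊆ KA ∧ B ⊆ KB ∧ KA ∪ KB = Set.univ) :=
  whyburn_lemma_general hA hB
end

section
/- Let Ω ⊆ ℝ² be an open, connected, simply connected set, and let V = (V₁, V₂) : Ω → ℝ² be a continuously differentiable vector field that is divergence free on Ω, i.e. ∂ₓV₁ + ∂_y V₂ = 0 at every point of Ω. Then there exists a differentiable function ψ : Ω → ℝ (a stream function) such that V = ∇⊥ψ on Ω, that is, V₁ = −∂_y ψ and V₂ = ∂ₓ ψ at every point of Ω. -/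
open Set

/-!
`V = ∇⊥ψ` says that `ψ` is a primitive of the `1`-form `V₂ dx - V₁ dy`, whose exterior derivative
is `-(∂ₓV₁ + ∂_y V₂) dx ∧ dy`; so the form is closed and has primitives on small balls. Two of these
differ by a locally constant function, so the germs of all the primitives form a covering space of
`Ω`. As `Ω` is simply connected, this covering has a continuous section: a global primitive.
-/

open Bundle ContinuousLinearMap Filter Topology

section LocallyConstant

variable {X F : Type*} [TopologicalSpace X]

theorem continuousAt_iff_eventuallyConst [TopologicalSpace F] [DiscreteTopology F] {f : X → F}
    {x : X} : ContinuousAt f x ↔ EventuallyConst f (𝓝 x) := by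
  rw [ContinuousAt, nhds_discrete F]
  refine ⟨.of_tendsto, fun h => ?_⟩
  have : Nonempty F := ⟨f x⟩
  obtain ⟨c, hc⟩ := eventuallyConst_iff_tendsto.1 h
  obtain rfl : f x = c := (tendsto_pure.1 hc).self_of_nhds
  exact hc

theorem exists_continuous_section_of_discreteTopology [SimplyConnectedSpace X]
    [LocallyPathConnectedSpace X] [TopologicalSpace F] [DiscreteTopology F] [Nonempty F]
    (E : X → Type*) [TopologicalSpace (TotalSpace F E)] [∀ x, TopologicalSpace (E x)]
    [FiberBundle F E] : ∃ s : ∀ x, E x, Continuous fun x => TotalSpace.mk' F x (s x) := by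
  obtain ⟨x₀⟩ : Nonempty X := inferInstance
  obtain ⟨e₀, he₀⟩ := FiberBundle.surjective_proj F E x₀
  have hcov : IsCoveringMap (π F E) := FiberBundle.isCoveringMap
  obtain ⟨σ, ⟨-, hσ⟩, -⟩ := hcov.existsUnique_continuousMap_lifts (.id X) x₀ e₀ he₀
  have eq_mk (x : X) (e : TotalSpace F E) (h : e.proj = x) : ∃ v, TotalSpace.mk' F x v = e := by
    subst h
    exact ⟨e.2, rfl⟩
  choose s hs using fun x => eq_mk x (σ x) (congrFun hσ x)
  exact ⟨s, σ.continuous.congr fun x => (hs x).symm⟩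

variable [AddGroup F] {ι : Type*} {U : ι → Set X} {f : ι → X → F}

/-- The bundle over `X` whose sections are the functions `g : X → F` such that `g - f i` is locally
constant on `U i` for all `i`: the coordinate of such a `g` in the `i`-th chart is `g - f i`. -/
def differenceBundleCore [TopologicalSpace F] [DiscreteTopology F] (hU : ∀ i, IsOpen (U i))
    (hf : ∀ i j, ∀ x ∈ U i ∩ U j, EventuallyConst (f i - f j) (𝓝 x))
    (idx : X → ι) (hidx : ∀ x, x ∈ U (idx x)) : FiberBundleCore ι X F where
  baseSet := U
  isOpen_baseSet := hU
  indexAt := idx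
  mem_baseSet_at := hidx
  coordChange i j x v := v + (f i x - f j x)
  coordChange_self i x _ v := by rw [sub_self, add_zero]
  continuousOn_coordChange i j := by
    have hij : ContinuousOn (f i - f j) (U i ∩ U j) := fun x hx =>
      (continuousAt_iff_eventuallyConst.2 (hf i j x hx)).continuousWithinAt
    exact continuousOn_snd.add (hij.comp continuousOn_fst fun _ hp => hp.1)
  coordChange_comp i j k x _ v := by rw [add_assoc, sub_add_sub_cancel]

theorem exists_forall_eventuallyConst_sub [SimplyConnectedSpace X] [LocallyPathConnectedSpace X]
    (hU : ∀ i, IsOpen (U i)) (hcover : ∀ x, ∃ i, x ∈ U i)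
    (hf : ∀ i j, ∀ x ∈ U i ∩ U j, EventuallyConst (f i - f j) (𝓝 x)) :
    ∃ g : X → F, ∀ i, ∀ x ∈ U i, EventuallyConst (g - f i) (𝓝 x) := by
  let : TopologicalSpace F := ⊥
  have : DiscreteTopology F := ⟨rfl⟩
  choose idx hidx using hcover
  let Z := differenceBundleCore hU hf idx hidx
  obtain ⟨s, hs⟩ := exists_continuous_section_of_discreteTopology (F := F) Z.Fiber
  let v (x : X) : F := s x
  refine ⟨fun x => v x + f (idx x) x, fun i x hx => continuousAt_iff_eventuallyConst.1 ?_⟩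
  have hmem : TotalSpace.mk' F x (s x) ∈ (Z.localTriv i).source :=
    (Z.mem_localTriv_source i _).2 hx
  have hcoord : ContinuousAt (fun y => (Z.localTriv i (TotalSpace.mk' F y (s y))).2) x :=
    ((Z.localTriv i).tendsto_nhds_iff hmem |>.1 hs.continuousAt).2
  exact hcoord.congr (.of_forall fun y => (add_sub_assoc (v y) _ _).symm)

theorem exists_forall_mem_eventuallyConst_sub [LocallyPathConnectedSpace X] {Ω : Set X}
    [SimplyConnectedSpace Ω] (hΩ : IsOpen Ω) (hU : ∀ i, IsOpen (U i)) (hcover : Ω ⊆ ⋃ i, U i)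
    (hf : ∀ i j, ∀ x ∈ U i ∩ U j, EventuallyConst (f i - f j) (𝓝 x)) :
    ∃ g : X → F, ∀ i, ∀ x ∈ Ω ∩ U i, EventuallyConst (g - f i) (𝓝 x) := by
  have : LocallyPathConnectedSpace Ω := hΩ.locallyPathConnectedSpace
  obtain ⟨g, hg⟩ := exists_forall_eventuallyConst_sub (X := Ω)
    (U := fun i => Subtype.val ⁻¹' U i) (f := fun i x => f i x)
    (fun i => (hU i).preimage continuous_subtype_val) (fun x => by simpa using hcover x.2)
    (fun i j x hx => (hf i j x hx).comp_tendsto continuousAt_subtype_val)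
  refine ⟨Function.extend Subtype.val g 0, fun i x hx => ?_⟩
  rw [← map_nhds_subtype_coe_eq_nhds hx.1 (hΩ.mem_nhds hx.1)]
  refine (hg i ⟨x, hx.1⟩ hx.2).congr (.of_forall fun y => ?_)
  simp

end LocallyConstant

section Primitive

variable {𝕜 E F : Type*} [RCLike 𝕜] [NormedAddCommGroup E] [NormedSpace 𝕜 E]
  [NormedAddCommGroup F] [NormedSpace 𝕜 F] {Ω : Set E} {ω : E → E →L[𝕜] F}

theorem eventuallyConst_of_hasFDerivAt_zero {f : E → F} {x : E}
    (hf : ∀ᶠ y in 𝓝 x, HasFDerivAt f (0 : E →L[𝕜] F) y) : EventuallyConst f (𝓝 x) := by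
  let : NormedSpace ℝ E := .restrictScalars ℝ 𝕜 E
  obtain ⟨s, hs, hso, hxs⟩ := eventually_nhds_iff.1 hf
  have hopen : IsOpen (s ∩ f ⁻¹' {f x}) := hso.isOpen_inter_preimage_of_fderiv_eq_zero (𝕜 := 𝕜)
    (fun y hy => (hs y hy).differentiableAt.differentiableWithinAt) (fun y hy => (hs y hy).fderiv) _
  refine .of_tendsto (x := f x) (tendsto_pure.2 ?_)
  filter_upwards [hopen.mem_nhds ⟨hxs, rfl⟩] with y hy using hy.2

theorem exists_forall_hasFDerivAt_of_locally [SimplyConnectedSpace Ω] (hΩ : IsOpen Ω)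
    (hω : ∀ a ∈ Ω, ∃ f : E → F, ∀ᶠ x in 𝓝 a, HasFDerivAt f (ω x) x) :
    ∃ f : E → F, ∀ a ∈ Ω, HasFDerivAt f (ω a) a := by
  let : NormedSpace ℝ E := .restrictScalars ℝ 𝕜 E
  choose f hf using fun a : Ω => hω a a.2
  let U (a : Ω) : Set E := interior {x | HasFDerivAt (f a) (ω x) x}
  have hderiv (a : Ω) (x : E) (hx : x ∈ U a) : ∀ᶠ y in 𝓝 x, HasFDerivAt (f a) (ω y) y :=
    mem_interior_iff_mem_nhds.1 hx
  have hmem (a : Ω) : (a : E) ∈ U a := mem_interior_iff_mem_nhds.2 (hf a)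
  have hsub (a b : Ω) (x : E) (hx : x ∈ U a ∩ U b) : EventuallyConst (f a - f b) (𝓝 x) := by
    refine eventuallyConst_of_hasFDerivAt_zero (𝕜 := 𝕜) ?_
    filter_upwards [hderiv a x hx.1, hderiv b x hx.2] with y ha hb
    simpa using ha.sub hb
  obtain ⟨g, hg⟩ := exists_forall_mem_eventuallyConst_sub hΩ (fun _ => isOpen_interior)
    (fun a ha => mem_iUnion.2 ⟨⟨a, ha⟩, hmem ⟨a, ha⟩⟩) hsub
  refine ⟨g, fun a ha => ?_⟩
  obtain ⟨c, hc⟩ := eventuallyConst_iff_exists_eventuallyEq.1 (hg ⟨a, ha⟩ a ⟨ha, hmem ⟨a, ha⟩⟩)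
  refine ((hf ⟨a, ha⟩).self_of_nhds.const_add c).congr_of_eventuallyEq ?_
  exact hc.mono fun x hx => sub_eq_iff_eq_add.1 hx

theorem exists_forall_hasFDerivAt_of_fderiv_symmetric_of_simplyConnectedSpace [NormedSpace ℝ E]
    [NormedSpace ℝ F] [CompleteSpace F] [SimplyConnectedSpace Ω] (hΩ : IsOpen Ω)
    (hω : DifferentiableOn ℝ ω Ω)
    (hdω : ∀ a ∈ Ω, ∀ x y, fderiv ℝ ω a x y = fderiv ℝ ω a y x) :
    ∃ f : E → F, ∀ a ∈ Ω, HasFDerivAt f (ω a) a := by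
  refine exists_forall_hasFDerivAt_of_locally hΩ fun a ha => ?_
  obtain ⟨r, hr, hball⟩ := Metric.isOpen_iff.1 hΩ a ha
  obtain ⟨f, hf⟩ := (convex_ball a r).exists_forall_hasFDerivAt_of_fderiv_symmetric
    Metric.isOpen_ball (hω.mono hball) fun x hx => hdω x (hball hx)
  exact ⟨f, eventually_of_mem (Metric.ball_mem_nhds a hr) hf⟩

end Primitive

section FluxForm

variable (𝕜 F : Type*) [NontriviallyNormedField 𝕜] [NormedAddCommGroup F] [NormedSpace 𝕜 F]

/-- The flux `1`-form `v₂ dx - v₁ dy` of a plane vector `v = (v₁, v₂)`, as a linear function of `v`;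
its primitives are the stream functions. The components of `v` may lie in any normed space. -/
noncomputable def fluxForm : F × F →L[𝕜] 𝕜 × 𝕜 →L[𝕜] F :=
  smulRightL 𝕜 (𝕜 × 𝕜) F (fst 𝕜 𝕜 𝕜) ∘L snd 𝕜 F F -
    smulRightL 𝕜 (𝕜 × 𝕜) F (snd 𝕜 𝕜 𝕜) ∘L fst 𝕜 F F

variable {𝕜 F}

theorem fluxForm_apply (v : F × F) (u : 𝕜 × 𝕜) : fluxForm 𝕜 F v u = u.1 • v.2 - u.2 • v.1 :=
  rfl

/-- With `L` the derivative of a vector field `V`, this is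
`d(V₂ dx - V₁ dy) = -(div V) dx ∧ dy`. -/
theorem fluxForm_map_sub_fluxForm_map (L : 𝕜 × 𝕜 →L[𝕜] F × F) (x y : 𝕜 × 𝕜) :
    fluxForm 𝕜 F (L x) y - fluxForm 𝕜 F (L y) x =
      (x.2 * y.1 - x.1 * y.2) • ((L (1, 0)).1 + (L (0, 1)).2) := by
  have hL (z : 𝕜 × 𝕜) : L z = z.1 • L (1, 0) + z.2 • L (0, 1) := by
    rw [← map_smul, ← map_smul, ← map_add]
    simp
  rw [fluxForm_apply, fluxForm_apply, hL x, hL y]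
  simp only [Prod.fst_add, Prod.snd_add, Prod.smul_fst, Prod.smul_snd]
  module

end FluxForm

theorem exists_stream_function_general {F : Type*} [NormedAddCommGroup F] [NormedSpace ℝ F]
    [CompleteSpace F] (Ω : Set (ℝ × ℝ)) (hΩ : IsOpen Ω) (hsc : SimplyConnectedSpace ↥Ω)
    (V : ℝ × ℝ → F × F) (hV : DifferentiableOn ℝ V Ω)
    (hdiv : ∀ p ∈ Ω,
      fderiv ℝ (fun q => (V q).1) p (1, 0) + fderiv ℝ (fun q => (V q).2) p (0, 1) = 0) :
    ∃ ψ : ℝ × ℝ → F, ∀ p ∈ Ω, DifferentiableAt ℝ ψ p ∧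
      (V p).1 = -(fderiv ℝ ψ p (0, 1)) ∧ (V p).2 = fderiv ℝ ψ p (1, 0) := by
  have hVd (p) (hp : p ∈ Ω) : HasFDerivAt V (fderiv ℝ V p) p :=
    (hV.differentiableAt (hΩ.mem_nhds hp)).hasFDerivAt
  have hω (p) (hp : p ∈ Ω) :
      HasFDerivAt (fun q => fluxForm ℝ F (V q)) (fluxForm ℝ F ∘L fderiv ℝ V p) p :=
    (fluxForm ℝ F).hasFDerivAt.comp p (hVd p hp)
  have hclosed (p) (hp : p ∈ Ω) (x y : ℝ × ℝ) :
      fluxForm ℝ F (fderiv ℝ V p x) y = fluxForm ℝ F (fderiv ℝ V p y) x := by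
    have hdivp : (fderiv ℝ V p (1, 0)).1 + (fderiv ℝ V p (0, 1)).2 = 0 := by
      simpa [(hVd p hp).fst.fderiv, (hVd p hp).snd.fderiv] using hdiv p hp
    rw [← sub_eq_zero, fluxForm_map_sub_fluxForm_map, hdivp, smul_zero]
  obtain ⟨ψ, hψ⟩ := exists_forall_hasFDerivAt_of_fderiv_symmetric_of_simplyConnectedSpace hΩ
    (fun p hp => (hω p hp).differentiableAt.differentiableWithinAt)
    fun p hp x y => by simpa [(hω p hp).fderiv] using hclosed p hp x y
  exact ⟨ψ, fun p hp => ⟨(hψ p hp).differentiableAt, by simp [(hψ p hp).fderiv, fluxForm_apply],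
    by simp [(hψ p hp).fderiv, fluxForm_apply]⟩⟩

/-- Existence of a stream function: a `C¹` divergence-free vector field on an open, connected,
simply connected planar domain is of the form `V = ∇⊥ψ = (-∂_y ψ, ∂ₓ ψ)`. -/
theorem exists_stream_function (Ω : Set (ℝ × ℝ)) (hΩ : IsOpen Ω) (hconn : IsConnected Ω)
    (hsc : SimplyConnectedSpace ↥Ω)
    (V : ℝ × ℝ → ℝ × ℝ) (hV : ContDiffOn ℝ 1 V Ω)
    (hdiv : ∀ p ∈ Ω,
      fderiv ℝ (fun q => (V q).1) p (1, 0) + fderiv ℝ (fun q => (V q).2) p (0, 1) = 0) :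
    ∃ ψ : ℝ × ℝ → ℝ, ∀ p ∈ Ω, DifferentiableAt ℝ ψ p ∧
      (V p).1 = -(fderiv ℝ ψ p (0, 1)) ∧ (V p).2 = fderiv ℝ ψ p (1, 0) :=
  exists_stream_function_general Ω hΩ hsc V (hV.differentiableOn one_ne_zero) hdiv
end
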